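/- arXiv:2308.02902 — 3 statements merged into one kernel-verified Lean document; each statement's English description precedes it below -/
import Mathlib

section
/- Let n ≥ 1, let O be a real orthogonal n×n matrix, let W_r be a real n×n matrix, W_in a real n×m matrix, ρ, ω real numbers, and β ∈ (0,1]. Define the ES²N state map G(u,x) = β·tanh(ρ·W_r·x + ω·W_in·u) + (1−β)·O·x for u ∈ ℝ^m, x ∈ ℝ^n, where tanh is applied entrywise. Write σ = ‖ρ·W_r‖ for the operator norm of ρ·W_r induced by the Euclidean norm. Then for every fixed input u ∈ ℝ^m and all states x, x' ∈ ℝ^n, ‖G(u,x) − G(u,x')‖ ≤ (1 − β(1−σ))·‖x − x'‖, where ‖·‖ is the Euclidean norm on ℝ^n. -/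
open Matrix

theorem tanh_sub_abs_le (a b : ℝ) : |Real.tanh a - Real.tanh b| ≤ |a - b| := by
  have hd : ∀ x : ℝ, HasDerivAt Real.tanh (1 / Real.cosh x ^ 2) x := by
    intro x
    have h := (Real.hasDerivAt_sinh x).div (Real.hasDerivAt_cosh x) (Real.cosh_pos x).ne'
    have e : Real.tanh = Real.sinh / Real.cosh := by
      funext y
      simp [Real.tanh_eq_sinh_div_cosh]
    rw [e]
    have e2 : Real.cosh x * Real.cosh x - Real.sinh x * Real.sinh x = 1 := by
      nlinarith [Real.cosh_sq x]
    rwa [e2] at h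
  have := Convex.norm_image_sub_le_of_norm_hasDerivWithin_le (f := Real.tanh) (C := 1)
    (s := Set.univ) (x := b) (y := a) (fun x _ => (hd x).hasDerivWithinAt) (by
      intro x _
      have h1 := Real.one_le_cosh x
      rw [Real.norm_eq_abs, abs_of_nonneg (by positivity), div_le_one (by positivity)]
      nlinarith) convex_univ (Set.mem_univ _) (Set.mem_univ _)
  simpa [Real.norm_eq_abs] using this

theorem orth_norm {n : ℕ} (O : Matrix (Fin n) (Fin n) ℝ) (hO : Oᵀ * O = 1)
    (v : EuclideanSpace ℝ (Fin n)) : ‖WithLp.toLp 2 (O.mulVec v)‖ = ‖v‖ := by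
  have key : (O.mulVec v) ⬝ᵥ (O.mulVec v) = (v : Fin n → ℝ) ⬝ᵥ v := by
    rw [Matrix.dotProduct_mulVec, Matrix.vecMul_mulVec, hO, Matrix.vecMul_one]
  rw [EuclideanSpace.norm_eq, EuclideanSpace.norm_eq]
  congr 1
  simpa [dotProduct, pow_two] using key

/-- The ES²N state map `G(u,x) = β·tanh(ρ·W_r·x + ω·W_in·u) + (1−β)·O·x` is Lipschitz in the
state with constant `1 − β(1−σ)`, where `σ = ‖ρ·W_r‖` is the Euclidean operator norm. -/
theorem es2n_lipschitz {n m : ℕ} (hn : 1 ≤ n)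
    (O Wr : Matrix (Fin n) (Fin n) ℝ) (hO : Oᵀ * O = 1)
    (Win : Matrix (Fin n) (Fin m) ℝ) (ρ ω β σ : ℝ) (hβ : β ∈ Set.Ioc (0 : ℝ) 1)
    (hσ : σ = ‖Matrix.toEuclideanCLM (𝕜 := ℝ) (ρ • Wr)‖)
    (G : EuclideanSpace ℝ (Fin m) → EuclideanSpace ℝ (Fin n) → EuclideanSpace ℝ (Fin n))
    (hG : ∀ (u : EuclideanSpace ℝ (Fin m)) (x : EuclideanSpace ℝ (Fin n)) (i : Fin n),
      G u x i = β * Real.tanh ((ρ • Wr).mulVec x i + (ω • Win).mulVec u i)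
        + (1 - β) * O.mulVec x i)
    (u : EuclideanSpace ℝ (Fin m)) (x x' : EuclideanSpace ℝ (Fin n)) :
    ‖G u x - G u x'‖ ≤ (1 - β * (1 - σ)) * ‖x - x'‖ := by
  obtain ⟨hβ0, hβ1⟩ := hβ
  set a : EuclideanSpace ℝ (Fin n) := WithLp.toLp 2 (fun i =>
    Real.tanh ((ρ • Wr).mulVec x i + (ω • Win).mulVec u i)
      - Real.tanh ((ρ • Wr).mulVec x' i + (ω • Win).mulVec u i)) with ha
  set b : EuclideanSpace ℝ (Fin n) := WithLp.toLp 2 (O.mulVec (x - x')) with hb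
  have e : G u x - G u x' = β • a + (1 - β) • b := by
    ext i
    have hs : O.mulVec (x - x') i = O.mulVec x i - O.mulVec x' i := by
      rw [Matrix.mulVec_sub, Pi.sub_apply]
    simp only [PiLp.sub_apply, PiLp.add_apply, PiLp.smul_apply, smul_eq_mul, hG, ha, hb, hs]
    ring
  have hbn : ‖b‖ = ‖x - x'‖ := orth_norm O hO _
  have han : ‖a‖ ≤ σ * ‖x - x'‖ := by
    rw [hσ]
    refine le_trans ?_ (ContinuousLinearMap.le_opNorm _ _)
    rw [EuclideanSpace.norm_eq, EuclideanSpace.norm_eq]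
    refine Real.sqrt_le_sqrt (Finset.sum_le_sum fun i _ => ?_)
    refine pow_le_pow_left₀ (norm_nonneg _) ?_ 2
    have h1 : (Matrix.toEuclideanCLM (𝕜 := ℝ) (ρ • Wr)) (x - x') i
        = (ρ • Wr).mulVec x i - (ρ • Wr).mulVec x' i := by
      rw [Matrix.ofLp_toEuclideanCLM, WithLp.ofLp_sub, Matrix.mulVec_sub, Pi.sub_apply]
    rw [h1, Real.norm_eq_abs, Real.norm_eq_abs]
    refine (tanh_sub_abs_le _ _).trans (le_of_eq ?_)
    congr 1
    ring
  rw [e]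
  calc ‖β • a + (1 - β) • b‖ ≤ ‖β • a‖ + ‖(1 - β) • b‖ := norm_add_le _ _
    _ = β * ‖a‖ + (1 - β) * ‖x - x'‖ := by
      rw [norm_smul, norm_smul, hbn, Real.norm_of_nonneg hβ0.le,
        Real.norm_of_nonneg (sub_nonneg.2 hβ1)]
    _ ≤ β * (σ * ‖x - x'‖) + (1 - β) * ‖x - x'‖ := by gcongr
    _ = (1 - β * (1 - σ)) * ‖x - x'‖ := by ring
end

section
/- Let n ≥ 1, let O be a real orthogonal n×n matrix, W a real n×n matrix, D a real diagonal n×n matrix, β ∈ (0,1], and γ, σ ≥ 0 with ‖D‖ ≤ γ and ‖W‖ = σ (operator norms induced by the Euclidean norm). Let J = β·D·W + (1−β)·O. Then every singular value s of J — that is, every nonnegative real number s such that s² is an eigenvalue of the symmetric matrix J·Jᵀ — satisfies (1−β) − β·γ·σ ≤ s ≤ (1−β) + β·γ·σ. -/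
open Matrix

/-- Singular-value bounds for the ES²N Jacobian: every singular value `s` of
`J = β·D·W + (1−β)·O` (i.e. `s ≥ 0` with `s²` an eigenvalue of `J·Jᵀ`) satisfies
`(1−β) − β·γ·σ ≤ s ≤ (1−β) + β·γ·σ`. -/
theorem es2n_jacobian_singular_values_bounds {n : ℕ} (hn : 1 ≤ n)
    (O W D : Matrix (Fin n) (Fin n) ℝ) (hO : Oᵀ * O = 1) (hD : D.IsDiag)
    (β γ σ : ℝ) (hβ : β ∈ Set.Ioc (0 : ℝ) 1) (hγ : 0 ≤ γ) (hσ : 0 ≤ σ)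
    (hDn : ‖Matrix.toEuclideanCLM (𝕜 := ℝ) D‖ ≤ γ)
    (hW : ‖Matrix.toEuclideanCLM (𝕜 := ℝ) W‖ = σ)
    (J : Matrix (Fin n) (Fin n) ℝ) (hJ : J = β • (D * W) + (1 - β) • O)
    (s : ℝ) (hs : 0 ≤ s) (hs2 : s ^ 2 ∈ spectrum ℝ (J * Jᵀ)) :
    (1 - β) - β * γ * σ ≤ s ∧ s ≤ (1 - β) + β * γ * σ := by
  classical
  obtain ⟨hβ0, hβ1⟩ := hβ
  have key : ∀ (A : Matrix (Fin n) (Fin n) ℝ) (x : EuclideanSpace ℝ (Fin n)),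
      ‖star (Matrix.toEuclideanCLM (𝕜 := ℝ) A) x‖ ^ 2
        = inner ℝ x (Matrix.toEuclideanCLM (𝕜 := ℝ) (A * Aᵀ) x) := by
    intro A x
    have h1 : Aᵀ = star A := by
      rw [Matrix.star_eq_conjTranspose, Matrix.conjTranspose_eq_transpose_of_trivial]
    rw [h1, map_mul, map_star, ContinuousLinearMap.star_eq_adjoint,
      mul_apply_eq_comp, ← ContinuousLinearMap.adjoint_inner_left,
      real_inner_self_eq_norm_sq]
  rw [← Matrix.spectrum_toLin', ← Module.End.hasEigenvalue_iff_mem_spectrum] at hs2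
  obtain ⟨v, hv⟩ := hs2.exists_hasEigenvector
  have hv0 := hv.2
  have hv1 := hv.apply_eq_smul
  rw [Matrix.toLin'_apply] at hv1
  set x : EuclideanSpace ℝ (Fin n) := WithLp.toLp 2 v with hx
  have hx0 : 0 < ‖x‖ := by
    rw [norm_pos_iff]
    intro h
    apply hv0
    simpa [hx] using h
  have hJx : Matrix.toEuclideanCLM (𝕜 := ℝ) (J * Jᵀ) x = (s ^ 2) • x := by
    rw [hx, Matrix.toEuclideanCLM_toLp, hv1, WithLp.toLp_smul]
  have hJn : ‖star (Matrix.toEuclideanCLM (𝕜 := ℝ) J) x‖ = s * ‖x‖ := by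
    have h := key J x
    rw [hJx, inner_smul_right, real_inner_self_eq_norm_sq, ← mul_pow] at h
    exact (pow_left_inj₀ (norm_nonneg _) (by positivity) two_ne_zero).1 h
  have hOn : ‖star (Matrix.toEuclideanCLM (𝕜 := ℝ) O) x‖ = ‖x‖ := by
    have h := key O x
    rw [mul_eq_one_comm.1 hO, map_one, one_apply_eq_self,
      real_inner_self_eq_norm_sq] at h
    exact (pow_left_inj₀ (norm_nonneg _) (norm_nonneg _) two_ne_zero).1 h
  have hDW : ‖star (Matrix.toEuclideanCLM (𝕜 := ℝ) (D * W)) x‖ ≤ γ * σ * ‖x‖ := by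
    refine (ContinuousLinearMap.le_opNorm _ _).trans ?_
    gcongr
    rw [ContinuousLinearMap.star_eq_adjoint, LinearIsometryEquiv.norm_map, map_mul, ← hW]
    exact (norm_mul_le _ _).trans (by gcongr)
  have hdec : star (Matrix.toEuclideanCLM (𝕜 := ℝ) J) x
      = β • star (Matrix.toEuclideanCLM (𝕜 := ℝ) (D * W)) x
        + (1 - β) • star (Matrix.toEuclideanCLM (𝕜 := ℝ) O) x := by
    rw [hJ, map_add, map_smul, map_smul]
    simp only [ContinuousLinearMap.star_eq_adjoint, map_add, map_smulₛₗ]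
    simp
  have e1 : ‖β • star (Matrix.toEuclideanCLM (𝕜 := ℝ) (D * W)) x‖ ≤ β * (γ * σ * ‖x‖) := by
    rw [norm_smul, Real.norm_of_nonneg hβ0.le]
    gcongr
  have e2 : ‖(1 - β) • star (Matrix.toEuclideanCLM (𝕜 := ℝ) O) x‖ = (1 - β) * ‖x‖ := by
    rw [norm_smul, Real.norm_of_nonneg (by linarith), hOn]
  have u := norm_add_le (β • star (Matrix.toEuclideanCLM (𝕜 := ℝ) (D * W)) x)
    ((1 - β) • star (Matrix.toEuclideanCLM (𝕜 := ℝ) O) x)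
  have l := norm_le_add_norm_add ((1 - β) • star (Matrix.toEuclideanCLM (𝕜 := ℝ) O) x)
    (β • star (Matrix.toEuclideanCLM (𝕜 := ℝ) (D * W)) x)
  rw [add_comm ((1 - β) • star (Matrix.toEuclideanCLM (𝕜 := ℝ) O) x)] at l
  rw [← hdec, hJn, e2] at u l
  constructor
  · refine le_of_mul_le_mul_right ?_ hx0
    linarith
  · refine le_of_mul_le_mul_right ?_ hx0
    linarith
end

section
/- Let n ≥ 1, T ≥ 1, let O be a real orthogonal n×n matrix, W a real n×n matrix, β ∈ (0,1], and γ, σ ≥ 0 with ‖W‖ = σ, and assume 1 − β(γσ + 1) > 0. For t = 0, …, T−1 let D_t be a real diagonal n×n matrix with ‖D_t‖ ≤ γ, and set J_t = β·D_t·W + (1−β)·O (the input-driven Jacobians of an ES²N along a trajectory). Suppose r : {0,…,T−1} → ℝ assigns to each t a singular value r(t) of J_t, i.e., r(t) ≥ 0 and r(t)² is an eigenvalue of J_t·J_tᵀ. Then the time-averaged log expansion rate satisfies log(1 − β(γσ + 1)) ≤ (1/T)·Σ_{t=0}^{T−1} log r(t) ≤ log(1 + β(γσ − 1)). Consequently the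 maximum local Lyapunov exponent Λ, defined as the maximum over the n choices of singular-value branch of this time average, obeys the same bounds: log(1 − β(γσ+1)) ≤ Λ ≤ log(1 + β(γσ−1)). -/
open Matrix

theorem es2n_aux {n : ℕ} (O W D J : Matrix (Fin n) (Fin n) ℝ) (hO : Oᵀ * O = 1)
    (β γ σ : ℝ) (hβ : β ∈ Set.Ioc (0 : ℝ) 1) (hγ : 0 ≤ γ)
    (hW : ‖Matrix.toEuclideanCLM (𝕜 := ℝ) W‖ = σ)
    (hDn : ‖Matrix.toEuclideanCLM (𝕜 := ℝ) D‖ ≤ γ)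
    (hJ : J = β • (D * W) + (1 - β) • O)
    (r : ℝ) (hr0 : 0 ≤ r) (hr : r ^ 2 ∈ spectrum ℝ (J * Jᵀ)) :
    1 - β * (γ * σ + 1) ≤ r ∧ r ≤ 1 + β * (γ * σ - 1) := by
  obtain ⟨hβ0, hβ1⟩ := hβ
  -- eigenvector
  have hdet : (algebraMap ℝ (Matrix (Fin n) (Fin n) ℝ) (r ^ 2) - J * Jᵀ).det = 0 := by
    by_contra h
    exact hr ((Matrix.isUnit_iff_isUnit_det _).2 (isUnit_iff_ne_zero.2 h))
  obtain ⟨v, hv0, hv⟩ := Matrix.exists_mulVec_eq_zero_iff.2 hdet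
  have hv2 : (J * Jᵀ) *ᵥ v = r ^ 2 • v := by
    rw [Matrix.sub_mulVec, sub_eq_zero, Algebra.algebraMap_eq_smul_one, Matrix.smul_mulVec,
      Matrix.one_mulVec] at hv
    exact hv.symm
  set w : EuclideanSpace ℝ (Fin n) := WithLp.toLp 2 v with hw
  have nsq : ∀ u : Fin n → ℝ, ‖(WithLp.toLp 2 u : EuclideanSpace ℝ (Fin n))‖ ^ 2 = u ⬝ᵥ u := by
    intro u
    rw [EuclideanSpace.norm_sq_eq]
    simp [dotProduct, sq]
  have tsq : ∀ M : Matrix (Fin n) (Fin n) ℝ, (Mᵀ *ᵥ v) ⬝ᵥ (Mᵀ *ᵥ v) = v ⬝ᵥ ((M * Mᵀ) *ᵥ v) := by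
    intro M
    rw [← Matrix.mulVec_mulVec, Matrix.dotProduct_mulVec v M, Matrix.mulVec_transpose]
  have hwpos : 0 < ‖w‖ := by
    rw [norm_pos_iff]
    intro h
    apply hv0
    simpa [hw] using h
  have hJn : ‖(WithLp.toLp 2 (Jᵀ *ᵥ v) : EuclideanSpace ℝ (Fin n))‖ = r * ‖w‖ := by
    rw [← sq_eq_sq₀ (norm_nonneg _) (by positivity), mul_pow, nsq, hw, nsq, tsq, hv2,
      dotProduct_smul, smul_eq_mul]
  have hOn : ‖(WithLp.toLp 2 (Oᵀ *ᵥ v) : EuclideanSpace ℝ (Fin n))‖ = ‖w‖ := by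
    rw [← sq_eq_sq₀ (norm_nonneg _) (by positivity), nsq, hw, nsq, tsq,
      mul_eq_one_comm.1 hO, Matrix.one_mulVec]
  have hDW : ‖Matrix.toEuclideanCLM (𝕜 := ℝ) (D * W)ᵀ‖ ≤ γ * σ := by
    have h1 : (D * W)ᵀ = star (D * W) := by
      rw [Matrix.star_eq_conjTranspose, Matrix.conjTranspose_eq_transpose_of_trivial]
    rw [h1, map_star, ContinuousLinearMap.star_eq_adjoint, LinearIsometryEquiv.norm_map, map_mul]
    refine (norm_mul_le _ _).trans ?_
    rw [hW]
    exact mul_le_mul_of_nonneg_right hDn (hW ▸ norm_nonneg _)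
  have hDWn : ‖(WithLp.toLp 2 ((D * W)ᵀ *ᵥ v) : EuclideanSpace ℝ (Fin n))‖ ≤ γ * σ * ‖w‖ := by
    rw [← Matrix.toEuclideanCLM_toLp (𝕜 := ℝ)]
    exact ContinuousLinearMap.le_of_opNorm_le _ hDW _
  have hsum : (WithLp.toLp 2 (Jᵀ *ᵥ v) : EuclideanSpace ℝ (Fin n)) =
      β • WithLp.toLp 2 ((D * W)ᵀ *ᵥ v) + (1 - β) • WithLp.toLp 2 (Oᵀ *ᵥ v) := by
    rw [hJ, Matrix.transpose_add, Matrix.transpose_smul, Matrix.transpose_smul,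
      Matrix.add_mulVec, Matrix.smul_mulVec, Matrix.smul_mulVec]
    rfl
  set a : EuclideanSpace ℝ (Fin n) := WithLp.toLp 2 ((D * W)ᵀ *ᵥ v)
  set b : EuclideanSpace ℝ (Fin n) := WithLp.toLp 2 (Oᵀ *ᵥ v)
  have ha : ‖β • a‖ ≤ β * (γ * σ * ‖w‖) := by
    rw [norm_smul, Real.norm_of_nonneg hβ0.le]
    exact mul_le_mul_of_nonneg_left hDWn hβ0.le
  have hb : ‖(1 - β) • b‖ = (1 - β) * ‖w‖ := by
    rw [norm_smul, Real.norm_of_nonneg (by linarith), hOn]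
  have h1 := norm_add_le (β • a) ((1 - β) • b)
  have h2 : ‖(1 - β) • b‖ ≤ ‖β • a + (1 - β) • b‖ + ‖β • a‖ := by
    have := norm_sub_le (β • a + (1 - β) • b) (β • a)
    simpa using this
  rw [← hsum, hJn] at h1 h2
  constructor
  · refine le_of_mul_le_mul_right ?_ hwpos
    linarith
  · refine le_of_mul_le_mul_right ?_ hwpos
    linarith

theorem es2n_avg {T : ℕ} (hT : 1 ≤ T) (a b : ℝ) (ha : 0 < a) (r : Fin T → ℝ)
    (h : ∀ t, a ≤ r t ∧ r t ≤ b) :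
    Real.log a ≤ (1 / (T : ℝ)) * ∑ t, Real.log (r t) ∧
      (1 / (T : ℝ)) * ∑ t, Real.log (r t) ≤ Real.log b := by
  have hT' : (0 : ℝ) < T := by exact_mod_cast hT
  have h1 : ∑ _t : Fin T, Real.log a ≤ ∑ t, Real.log (r t) :=
    Finset.sum_le_sum fun t _ => Real.log_le_log ha (h t).1
  have h2 : ∑ t, Real.log (r t) ≤ ∑ _t : Fin T, Real.log b :=
    Finset.sum_le_sum fun t _ => Real.log_le_log (ha.trans_le (h t).1) (h t).2
  simp only [Finset.sum_const, Finset.card_univ, Fintype.card_fin, nsmul_eq_mul] at h1 h2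
  rw [one_div, inv_mul_eq_div, le_div_iff₀ hT', div_le_iff₀ hT']
  constructor <;> linarith

/-- Bounds on the maximum local Lyapunov exponent of an ES²N along an input-driven trajectory:
for Jacobians `J_t = β·D_t·W + (1−β)·O` with `‖D_t‖ ≤ γ` and `‖W‖ = σ`, any choice `r t` of
singular values of `J_t` has time-averaged log expansion rate between `log(1 − β(γσ+1))` and
`log(1 + β(γσ−1))`; consequently the MLLE `Λ` (the maximum over singular-value branches of this
time average) obeys the same bounds. -/
theorem es2n_mlle_bounds {n T : ℕ} (hn : 1 ≤ n) (hT : 1 ≤ T)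
    (O W : Matrix (Fin n) (Fin n) ℝ) (hO : Oᵀ * O = 1)
    (β γ σ : ℝ) (hβ : β ∈ Set.Ioc (0 : ℝ) 1) (hγ : 0 ≤ γ) (hσ : 0 ≤ σ)
    (hW : ‖Matrix.toEuclideanCLM (𝕜 := ℝ) W‖ = σ)
    (hpos : 0 < 1 - β * (γ * σ + 1))
    (D : Fin T → Matrix (Fin n) (Fin n) ℝ) (hD : ∀ t, (D t).IsDiag)
    (hDn : ∀ t, ‖Matrix.toEuclideanCLM (𝕜 := ℝ) (D t)‖ ≤ γ)
    (J : Fin T → Matrix (Fin n) (Fin n) ℝ)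
    (hJ : ∀ t, J t = β • (D t * W) + (1 - β) • O)
    (r : Fin T → ℝ)
    (hr : ∀ t, 0 ≤ r t ∧ (r t) ^ 2 ∈ spectrum ℝ (J t * (J t)ᵀ))
    (R : Fin n → Fin T → ℝ)
    (hR : ∀ m t, 0 ≤ R m t ∧ (R m t) ^ 2 ∈ spectrum ℝ (J t * (J t)ᵀ))
    (hne : (Finset.univ : Finset (Fin n)).Nonempty)
    (Λ : ℝ)
    (hΛ : Λ = Finset.univ.sup' hne fun m => (1 / (T : ℝ)) * ∑ t, Real.log (R m t)) :
    (Real.log (1 - β * (γ * σ + 1)) ≤ (1 / (T : ℝ)) * ∑ t, Real.log (r t) ∧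
      (1 / (T : ℝ)) * ∑ t, Real.log (r t) ≤ Real.log (1 + β * (γ * σ - 1))) ∧
    (Real.log (1 - β * (γ * σ + 1)) ≤ Λ ∧ Λ ≤ Real.log (1 + β * (γ * σ - 1))) := by
  have key : ∀ q : Fin T → ℝ, (∀ t, 0 ≤ q t ∧ (q t) ^ 2 ∈ spectrum ℝ (J t * (J t)ᵀ)) → _ :=
    fun q hq => es2n_avg hT _ _ hpos q fun t =>
      es2n_aux O W (D t) (J t) hO β γ σ hβ hγ hW (hDn t) (hJ t) (q t) (hq t).1 (hq t).2
  refine ⟨key r hr, ?_, ?_⟩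
  · rw [hΛ]
    exact (key _ (hR ⟨0, hn⟩)).1.trans
      (Finset.le_sup' (fun m => (1 / (T : ℝ)) * ∑ t, Real.log (R m t)) (Finset.mem_univ _))
  · rw [hΛ]
    exact Finset.sup'_le _ _ fun m _ => (key _ (hR m)).2
end
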